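/- Let G be a finite group acting on a unital C*-algebra A by an action α. Then the map E : A ⋊_α G → A defined by E(\sum_{g} a_g u_g) = a_e is a conditional expectation of index-finite type, with quasi-basis ((u_g, u_g^*))_{g ∈ G}; in particular tsr(A ⋊_α G) ≤ tsr(A) + |G| − 1. -/

import Mathlib

/-- The set `Lg_n(A)` of left-generating `n`-tuples: tuples `(b 0, …, b (n-1))` such that
`∑ᵢ bᵢ* bᵢ` is invertible. -/
def Lg (A : Type*) [NormedRing A] [StarRing A] (n : ℕ) : Set (Fin n → A) :=
  {b | IsUnit (∑ i, star (b i) * b i)}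

/-- The topological stable rank of a unital (C*-)algebra: the least `n ≥ 1` such that
`Lg_n(A)` is dense in `Aⁿ`, or `∞` if there is no such `n`. -/
noncomputable def tsr (A : Type*) [NormedRing A] [StarRing A] : ℕ∞ :=
  sInf {N : ℕ∞ | ∃ n : ℕ, 1 ≤ n ∧ N = n ∧ Dense (Lg A n)}

/-- A C*-algebra is simple if it is nonzero and has no nontrivial closed two-sided ideals. -/
def CStarSimple (A : Type*) [CStarAlgebra A] : Prop :=
  (0 : A) ≠ 1 ∧ ∀ I : TwoSidedIdeal A, IsClosed (I : Set A) → I = ⊥ ∨ I = ⊤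

/-- A unital C*-algebra is finite if every isometry is a unitary (equivalently, `1` is not
Murray–von Neumann equivalent to a proper subprojection). -/
def CStarFinite (A : Type*) [CStarAlgebra A] : Prop :=
  ∀ v : A, star v * v = 1 → v * star v = 1

/-- A tracial state on a unital C*-algebra: a unital positive linear functional `τ`
with `τ(ab) = τ(ba)`. -/
def IsTracialState (A : Type*) [CStarAlgebra A] (τ : WeakDual ℂ A) : Prop :=
  τ 1 = 1 ∧ (∀ a : A, ∃ r : ℝ, 0 ≤ r ∧ τ (star a * a) = (r : ℂ)) ∧
    ∀ a b : A, τ (a * b) = τ (b * a)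

/-- The trace space `T(A)`, as a subset of the weak-* dual. -/
def TraceSpace (A : Type*) [CStarAlgebra A] : Set (WeakDual ℂ A) :=
  {τ | IsTracialState A τ}

/-- A conditional expectation from `B` onto `A`, relative to a unital embedding
`ι : A → B`: a unital positive `A`-bimodule projection of `B` onto `A`. -/
structure CondExpectation {A B : Type*} [CStarAlgebra A] [CStarAlgebra B]
    (ι : A →⋆ₐ[ℂ] B) where
  toFun : B →L[ℂ] A
  fix : ∀ a : A, toFun (ι a) = a
  left_mod : ∀ (a : A) (b : B), toFun (ι a * b) = a * toFun b
  right_mod : ∀ (a : A) (b : B), toFun (b * ι a) = toFun b * a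
  star_map : ∀ b : B, toFun (star b) = star (toFun b)
  pos : ∀ b : B, ∃ c : A, toFun (star b * b) = star c * c

/-- A quasi-basis for a conditional expectation `E`: a finite family `(v k)` in `B` with
`b = ∑ₖ vₖ E(vₖ* b) = ∑ₖ E(b vₖ) vₖ*` for all `b`. -/
def IsQuasiBasis {A B : Type*} [CStarAlgebra A] [CStarAlgebra B] {ι : A →⋆ₐ[ℂ] B}
    (E : CondExpectation ι) {n : ℕ} (v : Fin n → B) : Prop :=
  ∀ b : B, (b = ∑ k, v k * ι (E.toFun (star (v k) * b))) ∧
    (b = ∑ k, ι (E.toFun (b * v k)) * star (v k))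

/-- An inclusion `A ⊆ B` (given by the unital embedding `ι`) is of index-finite type if
there is a conditional expectation `E : B → A` admitting a finite quasi-basis. -/
def IndexFiniteType {A B : Type*} [CStarAlgebra A] [CStarAlgebra B]
    (ι : A →⋆ₐ[ℂ] B) : Prop :=
  ∃ (E : CondExpectation ι) (n : ℕ) (v : Fin n → B), IsQuasiBasis E v

/-- A realization of the (spatial/maximal, these agree in the nuclear case) C*-tensor
product of `B` and `Z`: a C*-algebra `T` together with commuting unital embeddings of `B`
and `Z` whose images generate `T` as a C*-algebra. -/
structure CStarTensor (B Z T : Type*) [CStarAlgebra B] [CStarAlgebra Z]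
    [CStarAlgebra T] where
  ι₁ : B →⋆ₐ[ℂ] T
  ι₂ : Z →⋆ₐ[ℂ] T
  inj₁ : Function.Injective ι₁
  inj₂ : Function.Injective ι₂
  comm : ∀ (b : B) (z : Z), ι₁ b * ι₂ z = ι₂ z * ι₁ b
  generates :
    (StarAlgebra.adjoin ℂ (Set.range (⇑ι₁) ∪ Set.range (⇑ι₂))).topologicalClosure = ⊤

/-- `B` absorbs `Z` tensorially: `B ⊗ Z ≅ B`. -/
def AbsorbsTensor (B Z : Type*) [CStarAlgebra B] [CStarAlgebra Z] : Prop :=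
  ∃ (T : Type) (_ : CStarAlgebra T) (_ : CStarTensor B Z T), Nonempty (T ≃⋆ₐ[ℂ] B)

/-- The n×n matrix algebra `Mₙ(ℂ)`, realized as operators on `ℂⁿ`. -/
abbrev MatrixAlg (n : ℕ) : Type :=
  EuclideanSpace ℂ (Fin n) →L[ℂ] EuclideanSpace ℂ (Fin n)

/-- A linear map between C*-algebras is completely positive if all of its matrix
amplifications preserve positivity. -/
def IsCompletelyPositive {A B : Type*} [CStarAlgebra A] [CStarAlgebra B]
    (φ : A →L[ℂ] B) : Prop :=
  ∀ (n : ℕ) (x : Matrix (Fin n) (Fin n) A), (∃ y : Matrix (Fin n) (Fin n) A, x = star y * y) →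
    ∃ z : Matrix (Fin n) (Fin n) B, x.map (⇑φ) = star z * z

/-- A C*-algebra is nuclear if the identity map can be approximated pointwise in norm by
unital completely positive maps factoring through matrix algebras. -/
def IsNuclear (A : Type*) [CStarAlgebra A] : Prop :=
  ∀ (s : Finset A) (ε : ℝ), 0 < ε →
    ∃ (n : ℕ) (φ : A →L[ℂ] MatrixAlg n) (ψ : MatrixAlg n →L[ℂ] A),
      IsCompletelyPositive φ ∧ IsCompletelyPositive ψ ∧ φ 1 = 1 ∧ ‖ψ‖ ≤ 1 ∧
      ∀ a ∈ s, ‖ψ (φ a) - a‖ < ε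

/-- The Jiang–Su algebra: the (unique) unital separable simple infinite-dimensional
nuclear C*-algebra with a unique tracial state whose K-theory agrees with that of `ℂ`;
here characterized by the listed properties together with being strongly self-absorbing. -/
structure IsJiangSuAlgebra (Z : Type*) [CStarAlgebra Z] : Prop where
  separable : TopologicalSpace.SeparableSpace Z
  simple : CStarSimple Z
  nuclear : IsNuclear Z
  infiniteDimensional : ¬ FiniteDimensional ℂ Z
  uniqueTracialState : ∃! τ : WeakDual ℂ Z, IsTracialState Z τ
  selfAbsorbing : AbsorbsTensor Z Z

/-- An action of a group `G` on a C*-algebra `A` by *-automorphisms. -/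
structure CStarAction (G : Type*) [Group G] (A : Type*) [CStarAlgebra A] where
  hom : G → (A ≃⋆ₐ[ℂ] A)
  hom_one : ∀ a : A, hom 1 a = a
  hom_mul : ∀ (g h : G) (a : A), hom (g * h) a = hom g (hom h a)

/-- A realization of the C*-crossed product `A ⋊_α G` (for `G` finite, the universal and
reduced crossed products agree): a C*-algebra `B` generated by a copy of `A` and unitaries
`u g` implementing `α`, together with the canonical faithful conditional expectation onto
`A` determined by `E(a u_g) = δ_{g,e} a`. -/
structure CrossedProduct (G : Type*) [Group G] (A : Type*) [CStarAlgebra A]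
    (α : CStarAction G A) (B : Type*) [CStarAlgebra B] where
  ι : A →⋆ₐ[ℂ] B
  inj : Function.Injective ι
  u : G → B
  u_unitary : ∀ g, star (u g) * u g = 1 ∧ u g * star (u g) = 1
  u_mul : ∀ g h, u g * u h = u (g * h)
  u_one : u 1 = 1
  covariant : ∀ (g : G) (a : A), u g * ι a * star (u g) = ι (α.hom g a)
  generates :
    (StarAlgebra.adjoin ℂ (Set.range (⇑ι) ∪ Set.range u)).topologicalClosure = ⊤
  E : B →L[ℂ] B
  E_apply_one : ∀ a : A, E (ι a * u 1) = ι a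
  E_apply_ne : ∀ (a : A) (g : G), g ≠ 1 → E (ι a * u g) = 0
  E_mem : ∀ b, E b ∈ Set.range (⇑ι)
  E_pos : ∀ b : B, ∃ a : A, E (star b * b) = ι (star a * a)
  E_faithful : ∀ b : B, E (star b * b) = 0 → b = 0

/-- Covering dimension at most `n`: every open cover has an open refinement in which each
point lies in at most `n + 1` sets. -/
def CoveringDimLe (X : Type*) [TopologicalSpace X] (n : ℕ) : Prop :=
  ∀ (I : Type) (U : I → Set X), (∀ i, IsOpen (U i)) → (⋃ i, U i) = Set.univ →
    ∃ (J : Type) (V : J → Set X), (∀ j, IsOpen (V j)) ∧ (⋃ j, V j) = Set.univ ∧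
      (∀ j, ∃ i, V j ⊆ U i) ∧
      ∀ x : X, {j | x ∈ V j}.Finite ∧ {j | x ∈ V j}.ncard ≤ n + 1

/-!
The monomials `a u_g` span a dense subspace of the crossed product, so identities between
continuous additive maps, in particular the quasi-basis identity, only have to be checked on
monomials.

The stable rank bound holds for every quasi-basis `v` of length `n`. Since `b = ∑ₖ E(b vₖ) vₖ*`,
each column over `B` is the product of a matrix over `A` with `n` columns and the column `v*`,
which is left invertible as `1 = ∑ₖ E(vₖ) vₖ*`. Products of left invertible matrices are left
invertible, so it suffices that the left invertible `(m + n - 1) × n` matrices over `A` are dense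
when `Lg_m(A)` is. This follows by induction on `n`: perturb the last column, without its last
entry, to be left invertible; row operations then turn the last column into `(0, …, 0, 1)`.
-/

section LgMatrix

variable {I J K L R S : Type*} [DecidableEq J] [DecidableEq L]

/-- The set of left invertible rectangular matrices, extending the notation `Lg_n` for
left-generating tuples, which over a C*-algebra are the left invertible columns
(`mem_Lg_iff_replicateCol_mem_LgMatrix`). -/
def LgMatrix (I J R : Type*) [Fintype I] [DecidableEq J] [Semiring R] : Set (Matrix I J R) :=
  {M | ∃ X : Matrix J I R, X * M = 1}

section Semiring

variable [Semiring R] [Semiring S]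

theorem mul_mem_LgMatrix [Fintype I] [Fintype J] {M : Matrix I J R} {N : Matrix J L R}
    (hM : M ∈ LgMatrix I J R) (hN : N ∈ LgMatrix J L R) : M * N ∈ LgMatrix I L R := by
  obtain ⟨X, hX⟩ := hM
  obtain ⟨Y, hY⟩ := hN
  refine ⟨Y * X, ?_⟩
  rw [Matrix.mul_assoc, ← Matrix.mul_assoc X, hX, Matrix.one_mul, hY]

theorem map_mem_LgMatrix [Fintype I] {M : Matrix I J R} (hM : M ∈ LgMatrix I J R) (f : R →+* S) :
    M.map f ∈ LgMatrix I J S := by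
  obtain ⟨X, hX⟩ := hM
  exact ⟨X.map f, by rw [← Matrix.map_mul, hX, Matrix.map_one f f.map_zero f.map_one]⟩

theorem submatrix_mem_LgMatrix [Fintype I] [Fintype K] {M : Matrix I J R}
    (hM : M ∈ LgMatrix I J R) (e : K ≃ I) (f : L ↪ J) : M.submatrix e f ∈ LgMatrix K L R := by
  obtain ⟨X, hX⟩ := hM
  refine ⟨X.submatrix f e, ?_⟩
  rw [Matrix.submatrix_mul_equiv, hX, Matrix.submatrix_one _ f.injective]

theorem dense_LgMatrix_submatrix [TopologicalSpace R] [Fintype I] [Fintype K]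
    (h : Dense (LgMatrix I J R)) (e : K ≃ I) (f : L ↪ J) : Dense (LgMatrix K L R) := by
  have hsurj : Function.Surjective fun M : Matrix I J R => M.submatrix e f := fun N =>
    ⟨Matrix.of fun i => Function.extend f (N (e.symm i)) 0, by ext; simp [f.injective.extend_apply]⟩
  exact hsurj.denseRange.dense_of_mapsTo (continuous_id.matrix_submatrix e f) h
    fun M hM => submatrix_mem_LgMatrix hM e f

theorem mem_closure_LgMatrix_of_isUnit_mul [TopologicalSpace R] [IsTopologicalSemiring R]
    [Fintype I] [DecidableEq I] {P : Matrix I I R} (hP : IsUnit P) {M : Matrix I J R}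
    (h : P * M ∈ closure (LgMatrix I J R)) : M ∈ closure (LgMatrix I J R) := by
  obtain ⟨P, rfl⟩ := hP
  have hPinv : ((P⁻¹ : (Matrix I I R)ˣ) : Matrix I I R) ∈ LgMatrix I I R := ⟨P, P.mul_inv⟩
  have hcont : Continuous fun N : Matrix I J R => (P⁻¹ : (Matrix I I R)ˣ).val * N :=
    continuous_const.matrix_mul continuous_id
  have := map_mem_closure hcont h fun N hN => mul_mem_LgMatrix hPinv hN
  rwa [← Matrix.mul_assoc, P.inv_mul, Matrix.one_mul] at this

end Semiring

section Ring

variable [Ring R]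

theorem fromBlocks_zero₁₂_mem_LgMatrix [Fintype I] [Finite J] [Fintype K] [Finite L]
    {M : Matrix I J R} {N : Matrix K L R} (hM : M ∈ LgMatrix I J R) (hN : N ∈ LgMatrix K L R)
    (C : Matrix K J R) : Matrix.fromBlocks M 0 C N ∈ LgMatrix (I ⊕ K) (J ⊕ L) R := by
  obtain ⟨X, hX⟩ := hM
  obtain ⟨Y, hY⟩ := hN
  cases nonempty_fintype J
  cases nonempty_fintype L
  refine ⟨Matrix.fromBlocks X 0 (-(Y * C * X)) Y, ?_⟩
  simp [Matrix.fromBlocks_multiply, Matrix.mul_assoc, hX, hY]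

theorem isUnit_fromBlocks_one_zero₁₂ [Fintype J] [Fintype L] (C : Matrix L J R) :
    IsUnit (Matrix.fromBlocks (1 : Matrix J J R) 0 C (1 : Matrix L L R)) :=
  isUnit_iff_exists.2 ⟨Matrix.fromBlocks 1 0 (-C) 1, by simp [Matrix.fromBlocks_multiply],
    by simp [Matrix.fromBlocks_multiply]⟩

theorem isUnit_fromBlocks_one_zero₂₁ [Fintype J] [Fintype L] (C : Matrix J L R) :
    IsUnit (Matrix.fromBlocks (1 : Matrix J J R) C 0 (1 : Matrix L L R)) :=
  isUnit_iff_exists.2 ⟨Matrix.fromBlocks 1 (-C) 0 1, by simp [Matrix.fromBlocks_multiply],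
    by simp [Matrix.fromBlocks_multiply]⟩

variable [TopologicalSpace R] [IsTopologicalRing R]

theorem fromBlocks_mem_closure_LgMatrix [Fintype I] [Finite J] [Fintype L]
    (h : Dense (LgMatrix I J R)) {c : Matrix I L R} (hc : c ∈ LgMatrix I L R)
    (a : Matrix I J R) (r : Matrix L J R) (d : Matrix L L R) :
    Matrix.fromBlocks a c r d ∈ closure (LgMatrix (I ⊕ L) (J ⊕ L) R) := by
  classical
  obtain ⟨x, hx⟩ := hc
  -- Adding `(1 - d) * x` times the upper rows to the lower ones turns `d` into `1` and `r` into
  -- `r'`; subtracting `c` times the new lower rows from the upper ones then clears `c`.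
  set r' := (1 - d) * x * a + r with hr'
  have hclear : Matrix.fromBlocks (a - c * r') 0 r' 1 ∈
      closure (LgMatrix (I ⊕ L) (J ⊕ L) R) :=
    map_mem_closure (f := fun s => Matrix.fromBlocks s 0 r' 1)
      (continuous_id.matrix_fromBlocks continuous_const continuous_const continuous_const)
      (h (a - c * r'))
      fun s hs => fromBlocks_zero₁₂_mem_LgMatrix hs ⟨1, Matrix.one_mul 1⟩ r'
  refine mem_closure_LgMatrix_of_isUnit_mul (isUnit_fromBlocks_one_zero₁₂ ((1 - d) * x)) ?_
  refine mem_closure_LgMatrix_of_isUnit_mul (isUnit_fromBlocks_one_zero₂₁ (-c)) ?_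
  convert hclear using 1
  simp [Matrix.fromBlocks_multiply, Matrix.mul_assoc, hx, hr', sub_eq_add_neg]

theorem dense_LgMatrix_sum [Fintype I] [Finite J] [Fintype L]
    (h₁ : Dense (LgMatrix I J R)) (h₂ : Dense (LgMatrix I L R)) :
    Dense (LgMatrix (I ⊕ L) (J ⊕ L) R) := by
  intro M
  rw [← M.fromBlocks_toBlocks, ← closure_closure]
  exact map_mem_closure (f := fun c => Matrix.fromBlocks M.toBlocks₁₁ c M.toBlocks₂₁ M.toBlocks₂₂)
    (continuous_const.matrix_fromBlocks continuous_id continuous_const continuous_const)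
    (h₂ M.toBlocks₁₂) fun c hc => fromBlocks_mem_closure_LgMatrix h₁ hc _ _ _

theorem dense_LgMatrix_add {m : ℕ} (h : Dense (LgMatrix (Fin m) (Fin 1) R)) (n : ℕ) :
    Dense (LgMatrix (Fin (m + n)) (Fin (n + 1)) R) := by
  induction n with
  | zero => exact h
  | succ n ih =>
    have hcol : Dense (LgMatrix (Fin (m + n)) (Fin 1) R) :=
      dense_LgMatrix_submatrix ih (Equiv.refl _) (Fin.castLEEmb (Nat.le_add_left 1 n))
    have hstep : Dense (LgMatrix (Fin (m + n + 1)) (Fin (n + 1 + 1)) R) :=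
      dense_LgMatrix_submatrix (dense_LgMatrix_sum ih hcol)
        finSumFinEquiv.symm finSumFinEquiv.symm.toEmbedding
    exact hstep

end Ring

end LgMatrix

section StableRank

theorem isUnit_sum_star_mul_self {B I : Type*} [CStarAlgebra B] [Fintype I] {x b : I → B}
    (h : ∑ i, x i * b i = 1) : IsUnit (∑ i, star (b i) * b i) := by
  let _ := CStarAlgebra.spectralOrder B
  have := CStarAlgebra.spectralOrderedRing B
  let x' := (WithCStarModule.equiv B (I → B)).symm x
  let b' := (WithCStarModule.equiv B (I → B)).symm (star b)
  have cauchy_schwarz : 1 ≤ ‖x'‖ ^ 2 • ∑ i, star (b i) * b i := by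
    simpa [x', b', WithCStarModule.pi_inner, WithCStarModule.inner_def, ← star_mul, ← star_sum, h]
      using CStarModule.inner_mul_inner_swap_le (A := B) (x := x') (y := b')
  have hunit := CStarAlgebra.isUnit_of_le 1 cauchy_schwarz
  rcases eq_or_ne (‖x'‖ ^ 2) 0 with hx | hx
  · rw [hx, zero_smul, isUnit_zero_iff] at hunit
    have := subsingleton_of_zero_eq_one hunit
    exact isUnit_of_subsingleton _
  · exact (isUnit_smul_iff (Units.mk0 _ hx) _).1 hunit

theorem mem_Lg_iff_replicateCol_mem_LgMatrix {A : Type*} [CStarAlgebra A] {n : ℕ} {b : Fin n → A} :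
    b ∈ Lg A n ↔ Matrix.replicateCol (Fin 1) b ∈ LgMatrix (Fin n) (Fin 1) A := by
  constructor
  · intro hb
    obtain ⟨c, hc⟩ := IsUnit.exists_left_inv hb
    refine ⟨Matrix.replicateRow (Fin 1) fun i => c * star (b i), ?_⟩
    ext i j
    obtain rfl := Subsingleton.elim i j
    simpa [Matrix.mul_apply, mul_assoc, ← Finset.mul_sum] using hc
  · rintro ⟨X, hX⟩
    refine isUnit_sum_star_mul_self (x := X 0) ?_
    simpa [Matrix.mul_apply] using congr_fun₂ hX 0 0

theorem dense_Lg_iff_dense_LgMatrix {A : Type*} [CStarAlgebra A] {n : ℕ} :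
    Dense (Lg A n) ↔ Dense (LgMatrix (Fin n) (Fin 1) A) := by
  let col : (Fin n → A) ≃ₜ Matrix (Fin n) (Fin 1) A :=
    Homeomorph.piCongrRight fun _ => (Homeomorph.funUnique (Fin 1) A).symm
  have hcol : Lg A n = col ⁻¹' LgMatrix (Fin n) (Fin 1) A :=
    Set.ext fun _ => mem_Lg_iff_replicateCol_mem_LgMatrix
  rw [hcol, col.isOpenQuotientMap.dense_preimage_iff]

theorem tsr_le_add_of_dense_Lg {A B : Type*} [NormedRing A] [StarRing A] [NormedRing B]
    [StarRing B] {k : ℕ} (h : ∀ m, Dense (Lg A m) → Dense (Lg B (m + k))) :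
    tsr B ≤ tsr A + k := by
  rcases Set.eq_empty_or_nonempty {N : ℕ∞ | ∃ n : ℕ, 1 ≤ n ∧ N = n ∧ Dense (Lg A n)} with hA | hA
  · simp [tsr, hA]
  · obtain ⟨m, hm, htsr, hdense⟩ := csInf_mem hA
    rw [← tsr] at htsr
    exact sInf_le ⟨m + k, by omega, by rw [htsr, Nat.cast_add], h m hdense⟩

end StableRank

namespace IsQuasiBasis

variable {A B : Type*} [CStarAlgebra A] [CStarAlgebra B] {ι : A →⋆ₐ[ℂ] B}
  {E : CondExpectation ι} {n : ℕ} {v : Fin n → B}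

theorem of_eq_sum_left (h : ∀ b, b = ∑ k, v k * ι (E.toFun (star (v k) * b))) :
    IsQuasiBasis E v := by
  refine fun b => ⟨h b, ?_⟩
  simpa [← map_star, ← E.star_map] using congr_arg star (h (star b))

theorem map_mul_replicateCol_star (hv : IsQuasiBasis E v) {I : Type*} (N : Matrix I (Fin 1) B) :
    (Matrix.of fun i k => E.toFun (N i 0 * v k)).map ι * Matrix.replicateCol (Fin 1) (star v) =
      N := by
  ext i j
  simpa [Matrix.mul_apply, Subsingleton.elim j 0] using (hv (N i 0)).2.symm

open scoped CStarAlgebra in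
theorem dense_Lg_add (hv : IsQuasiBasis E v) {m : ℕ} (h : Dense (Lg A m)) :
    Dense (Lg B (m + (n - 1))) := by
  rw [dense_Lg_iff_dense_LgMatrix] at h ⊢
  have hdense : Dense (LgMatrix (Fin (m + (n - 1))) (Fin n) A) :=
    dense_LgMatrix_submatrix (dense_LgMatrix_add h (n - 1)) (Equiv.refl _)
      (Fin.castLEEmb le_tsub_add)
  have hsurj : Function.Surjective fun M : Matrix (Fin (m + (n - 1))) (Fin n) A =>
      M.map ι * Matrix.replicateCol (Fin 1) (star v) :=
    fun N => ⟨_, hv.map_mul_replicateCol_star N⟩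
  have hcont : Continuous fun M : Matrix (Fin (m + (n - 1))) (Fin n) A =>
      M.map ι * Matrix.replicateCol (Fin 1) (star v) :=
    (continuous_id.matrix_map (map_continuous ι)).matrix_mul continuous_const
  have hstar : Matrix.replicateCol (Fin 1) (star v) ∈ LgMatrix (Fin n) (Fin 1) B :=
    ⟨_, hv.map_mul_replicateCol_star 1⟩
  exact hsurj.denseRange.dense_of_mapsTo hcont hdense fun M hM =>
    mul_mem_LgMatrix (map_mem_LgMatrix hM (ι : A →+* B)) hstar

theorem tsr_le (hv : IsQuasiBasis E v) : tsr B ≤ tsr A + (n - 1 : ℕ) :=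
  tsr_le_add_of_dense_Lg fun _ => hv.dense_Lg_add

end IsQuasiBasis

namespace CrossedProduct

variable {G : Type*} [Group G] {A : Type*} [CStarAlgebra A] {α : CStarAction G A}
  {B : Type*} [CStarAlgebra B] (cp : CrossedProduct G A α B)

theorem star_u (g : G) : star (cp.u g) = cp.u g⁻¹ :=
  left_inv_eq_right_inv (cp.u_unitary g).1 (by rw [cp.u_mul, mul_inv_cancel, cp.u_one])

theorem u_mul_ι (g : G) (a : A) : cp.u g * cp.ι a = cp.ι (α.hom g a) * cp.u g := by
  rw [← cp.covariant, mul_assoc, (cp.u_unitary g).1, mul_one]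

theorem u_mul_ι_mul_u (g h : G) (a : A) :
    cp.u g * (cp.ι a * cp.u h) = cp.ι (α.hom g a) * cp.u (g * h) := by
  rw [← mul_assoc, cp.u_mul_ι, mul_assoc, cp.u_mul]

theorem star_ι_mul_u (a : A) (g : G) :
    star (cp.ι a * cp.u g) = cp.ι (α.hom g⁻¹ (star a)) * cp.u g⁻¹ := by
  rw [star_mul, cp.star_u, ← map_star, cp.u_mul_ι]

/-- The multiplicative monoid of monomials `a u_g`, whose linear span is dense in the crossed
product. -/
def monomials : Submonoid B where
  carrier := Set.range fun x : A × G => cp.ι x.1 * cp.u x.2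
  one_mem' := ⟨(1, 1), by simp [cp.u_one]⟩
  mul_mem' := by
    rintro _ _ ⟨⟨a, g⟩, rfl⟩ ⟨⟨b, h⟩, rfl⟩
    refine ⟨(a * α.hom g b, g * h), ?_⟩
    simp only [map_mul, mul_assoc, cp.u_mul_ι_mul_u]

theorem star_monomials_subset : star (cp.monomials : Set B) ⊆ cp.monomials := by
  rintro b ⟨⟨a, g⟩, hb⟩
  exact ⟨(α.hom g⁻¹ (star a), g⁻¹), by rw [← star_star b, ← hb, cp.star_ι_mul_u]⟩

theorem dense_span_monomials : Dense (Submodule.span ℂ (cp.monomials : Set B) : Set B) := by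
  have hgen : Set.range cp.ι ∪ Set.range cp.u ⊆ cp.monomials := by
    rintro _ (⟨a, rfl⟩ | ⟨g, rfl⟩)
    · exact ⟨(a, 1), by simp [cp.u_one]⟩
    · exact ⟨(1, g), by simp⟩
  have hclosure : Submonoid.closure (Set.range cp.ι ∪ Set.range cp.u ∪
      star (Set.range cp.ι ∪ Set.range cp.u)) ≤ cp.monomials :=
    Submonoid.closure_le.2
      (Set.union_subset hgen ((Set.star_subset_star.2 hgen).trans cp.star_monomials_subset))
  have hadjoin : Dense (StarAlgebra.adjoin ℂ (Set.range cp.ι ∪ Set.range cp.u) : Set B) := by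
    rw [dense_iff_closure_eq, ← StarSubalgebra.topologicalClosure_coe, cp.generates]
    rfl
  refine hadjoin.mono fun b hb => Submodule.span_mono hclosure ?_
  rwa [← StarAlgebra.adjoin_eq_span]

theorem induction {p : B → Prop} (hp : IsClosed {b | p b}) (mul : ∀ a g, p (cp.ι a * cp.u g))
    (add : ∀ b c, p b → p c → p (b + c)) (b : B) : p b := by
  refine hp.closure_subset_iff.2 (fun b hb => ?_) (cp.dense_span_monomials b)
  induction hb using Submodule.closure_induction with
  | zero => simpa using mul 0 1
  | add b c _ _ hb hc => exact add b c hb hc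
  | smul_mem r b hb =>
    obtain ⟨⟨a, g⟩, rfl⟩ := hb
    simpa using mul (r • a) g

/-- The embedding of the coefficient algebra as a linear isometry, used to regard the expectation
`E : B → B` with range in `ι(A)` as a map into `A`. -/
def ιₗᵢ : A →ₗᵢ[ℂ] B where
  toLinearMap := cp.ι.toAlgHom.toLinearMap
  norm_map' := NonUnitalStarAlgHom.norm_map cp.ι cp.inj

/-- The canonical expectation `∑ a_g u_g ↦ a_e` with values in the coefficient algebra. -/
noncomputable def expectation : B →L[ℂ] A :=
  cp.ιₗᵢ.equivRange.symm.toContinuousLinearEquiv.toContinuousLinearMap ∘L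
    cp.E.codRestrict cp.ιₗᵢ.range cp.E_mem

theorem ι_expectation (b : B) : cp.ι (cp.expectation b) = cp.E b :=
  congr_arg Subtype.val (cp.ιₗᵢ.equivRange.apply_symm_apply ⟨cp.E b, cp.E_mem b⟩)

theorem expectation_ι_mul_u [DecidableEq G] (a : A) (g : G) :
    cp.expectation (cp.ι a * cp.u g) = if g = 1 then a else 0 := by
  apply cp.inj
  rw [cp.ι_expectation]
  split_ifs with hg
  · rw [hg, cp.E_apply_one]
  · rw [cp.E_apply_ne a g hg, map_zero]

theorem expectation_ι_mul (a : A) (b : B) :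
    cp.expectation (cp.ι a * b) = a * cp.expectation b := by
  classical
  induction b using cp.induction with
  | hp => exact isClosed_eq (by fun_prop) (by fun_prop)
  | mul a' g =>
    rw [← mul_assoc, ← map_mul, cp.expectation_ι_mul_u, cp.expectation_ι_mul_u, mul_ite, mul_zero]
  | add b c hb hc => rw [mul_add, map_add, hb, hc, map_add, mul_add]

theorem expectation_star (b : B) : cp.expectation (star b) = star (cp.expectation b) := by
  classical
  induction b using cp.induction with
  | hp => exact isClosed_eq (by fun_prop) (by fun_prop)
  | mul a g =>
    rw [cp.star_ι_mul_u, cp.expectation_ι_mul_u, cp.expectation_ι_mul_u]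
    rcases eq_or_ne g 1 with rfl | hg
    · simp [α.hom_one]
    · simp [hg]
  | add b c hb hc => rw [star_add, map_add, hb, hc, map_add, star_add]

theorem expectation_mul_ι (a : A) (b : B) :
    cp.expectation (b * cp.ι a) = cp.expectation b * a := by
  apply star_injective
  rw [← cp.expectation_star, star_mul, ← map_star cp.ι, cp.expectation_ι_mul, cp.expectation_star,
    star_mul]

/-- The canonical conditional expectation of a crossed product onto its coefficient algebra. -/
noncomputable def condExpectation : CondExpectation cp.ι where
  toFun := cp.expectation
  fix a := by classical simpa [cp.u_one] using cp.expectation_ι_mul_u a 1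
  left_mod := cp.expectation_ι_mul
  right_mod := cp.expectation_mul_ι
  star_map := cp.expectation_star
  pos b := (cp.E_pos b).imp fun c hc => cp.inj (by rw [cp.ι_expectation, hc])

theorem sum_u_mul_expectation [Fintype G] (b : B) :
    ∑ g, cp.u g * cp.ι (cp.expectation (star (cp.u g) * b)) = b := by
  classical
  have hι : Continuous cp.ι := cp.ιₗᵢ.continuous
  induction b using cp.induction with
  | hp => exact isClosed_eq (by fun_prop) (by fun_prop)
  | mul a h =>
    have hterm (g : G) : cp.u g * cp.ι (cp.expectation (star (cp.u g) * (cp.ι a * cp.u h))) =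
        if g = h then cp.ι a * cp.u h else 0 := by
      rw [cp.star_u, cp.u_mul_ι_mul_u, cp.expectation_ι_mul_u]
      simp only [inv_mul_eq_one]
      split_ifs with hgh
      · rw [hgh, cp.u_mul_ι, ← α.hom_mul, mul_inv_cancel, α.hom_one]
      · rw [map_zero, mul_zero]
    simp only [hterm, Finset.sum_ite_eq', Finset.mem_univ, if_true]
  | add b c hb hc => simp only [mul_add, map_add, Finset.sum_add_distrib, hb, hc]

theorem isQuasiBasis_u {n : ℕ} (e : Fin n ≃ G) :
    IsQuasiBasis cp.condExpectation fun k => cp.u (e k) :=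
  let _ : Fintype G := .ofEquiv _ e
  .of_eq_sum_left fun b =>
    ((e.sum_comp fun g => cp.u g * cp.ι (cp.expectation (star (cp.u g) * b))).trans
      (cp.sum_u_mul_expectation b)).symm

end CrossedProduct

/-- the canonical expectation `E(∑ a_g u_g) = a_e` on a crossed product by a
finite group is a conditional expectation of index-finite type with quasi-basis
`(u_g, u_g*)_{g ∈ G}`; in particular `tsr(A ⋊ G) ≤ tsr A + |G| - 1`. -/
theorem crossedProduct_canonical_condExp (G : Type*) [Group G] [Fintype G]
    (A : Type*) [CStarAlgebra A] (α : CStarAction G A)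
    (B : Type*) [CStarAlgebra B] (cp : CrossedProduct G A α B) :
    (∃ E' : CondExpectation cp.ι,
        (∀ b : B, cp.ι (E'.toFun b) = cp.E b) ∧
        IsQuasiBasis E' (fun k : Fin (Fintype.card G) => cp.u ((Fintype.equivFin G).symm k))) ∧
      tsr B ≤ tsr A + (Fintype.card G - 1 : ℕ) := by
  have hu := cp.isQuasiBasis_u (Fintype.equivFin G).symm
  exact ⟨⟨cp.condExpectation, cp.ι_expectation, hu⟩, hu.tsr_le⟩
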